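/- arXiv:1303.5958 — 4 statements merged into one kernel-verified Lean document; each statement's English description precedes it below -/
import Mathlib

section
/- Let f_1, …, f_n : ℝ → ℝ (n ≥ 2) be affine functions f_k(x) = a_k·x + b_k with pairwise distinct slopes a_1, …, a_n. Suppose i ≠ j and x_0 ∈ ℝ satisfy f_i(x_0) = f_j(x_0), and for every other pair k ≠ l with {k,l} ≠ {i,j}, the x-coordinate of the intersection point of the graphs of f_k and f_l is strictly less than x_0. Then there is no index k ∉ {i,j} whose slope a_k lies strictly between a_i and a_j. (In other words, the rightmost vertex of an arrangement of pairwise non-parallel, non-vertical lines is the intersection of two lines that are consecutive in slope order.) -/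
/-!
To the right of the crossing point of two lines, the steeper line lies above. If all crossings
other than that of `f_i` and `f_j` lie strictly to the left of `x0`, then a line whose slope is
strictly between those of `f_i` and `f_j` would pass strictly between them over `x0`, where they
meet.
-/

section Lines

variable {K : Type*} [Field K] [LinearOrder K] [IsStrictOrderedRing K]

theorem crossing_lt_iff_of_slope_lt {a a' b b' x : K} (h : a < a') :
    (b' - b) / (a - a') < x ↔ a * x + b < a' * x + b' := by
  rw [div_lt_iff_of_neg (sub_neg.2 h), mul_sub]
  constructor <;> intro <;> linarith

theorem rightmost_vertex_consecutive_slopes_general {ι : Type*} {a b : ι → K} {i j : ι} {x0 : K}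
    (hmeet : a i * x0 + b i = a j * x0 + b j)
    (hleft : ∀ k l, a k ≠ a l → ({k, l} : Set ι) ≠ {i, j} → (b l - b k) / (a k - a l) < x0) :
    ¬ ∃ k, (a i < a k ∧ a k < a j) ∨ (a j < a k ∧ a k < a i) := by
  have below_of_slope_lt {k l : ι} (hkl : a k < a l) (hne : ({k, l} : Set ι) ≠ {i, j}) :
      a k * x0 + b k < a l * x0 + b l :=
    (crossing_lt_iff_of_slope_lt hkl).1 (hleft k l hkl.ne hne)
  rintro ⟨k, hk⟩
  have hk_notMem : k ∉ ({i, j} : Set ι) := by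
    rintro (rfl | rfl) <;> simp at hk
  have pair_left_ne (l : ι) : ({k, l} : Set ι) ≠ {i, j} :=
    ne_of_mem_of_not_mem' (Set.mem_insert k {l}) hk_notMem
  have pair_right_ne (l : ι) : ({l, k} : Set ι) ≠ {i, j} :=
    Set.pair_comm k l ▸ pair_left_ne l
  rcases hk with ⟨hik, hkj⟩ | ⟨hjk, hki⟩
  · exact ((below_of_slope_lt hik (pair_right_ne i)).trans
      (below_of_slope_lt hkj (pair_left_ne j))).ne hmeet
  · exact ((below_of_slope_lt hjk (pair_right_ne j)).trans
      (below_of_slope_lt hki (pair_left_ne i))).ne hmeet.symm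

end Lines

/-- The rightmost vertex of an arrangement of pairwise non-parallel, non-vertical
lines is the intersection of two lines that are consecutive in slope order:
if the lines `f_i`, `f_j` meet at abscissa `x0` and every other pair of lines
meets strictly to the left of `x0`, then no third slope lies strictly between
the slopes of `f_i` and `f_j`. -/
theorem rightmost_vertex_consecutive_slopes
    (n : ℕ) (hn : 2 ≤ n) (a b : Fin n → ℝ)
    (ha : Function.Injective a)
    (i j : Fin n) (hij : i ≠ j) (x0 : ℝ)
    (hmeet : a i * x0 + b i = a j * x0 + b j)
    (hleft : ∀ k l : Fin n, k ≠ l → ({k, l} : Set (Fin n)) ≠ {i, j} →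
      (b l - b k) / (a k - a l) < x0) :
    ¬ ∃ k : Fin n, k ≠ i ∧ k ≠ j ∧
      ((a i < a k ∧ a k < a j) ∨ (a j < a k ∧ a k < a i)) := by
  rintro ⟨k, -, -, hk⟩
  exact rightmost_vertex_consecutive_slopes_general hmeet
    (fun k l hkl => hleft k l (ne_of_apply_ne a hkl)) ⟨k, hk⟩
end

section
/- Let w ≥ 1 be an integer. Consider four lines in ℝ², each given as { s + t·v : t ∈ ℝ } where s ∈ ℤ² and v ∈ ℤ² with every coordinate of v of absolute value at most 2^{w−1}. Suppose the first and second lines have nonzero direction determinant and intersect in the point χ, and the third and fourth lines have nonzero direction determinant and intersect in the point χ′. If χ ≠ χ′, then ‖χ − χ′‖ ≥ 2^{2−4w}; in particular, any two distinct crossing points in an arrangement of such lines are at distance at least 2^{2−4w} from each other. -/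
/-- `p` lies on the line through the integer point `s` with integer
direction vector `v`, in the Euclidean plane. -/
def OnIntLine2 (s v : ℤ × ℤ) (p : EuclideanSpace ℝ (Fin 2)) : Prop :=
  ∃ t : ℝ, p 0 = (s.1 : ℝ) + t * (v.1 : ℝ) ∧ p 1 = (s.2 : ℝ) + t * (v.2 : ℝ)

/-!
By Cramer's rule a crossing point has coordinates with common denominator the determinant of the two
directions, so the difference of two crossing points has coordinates in `(1 / (D * E)) ℤ`, where `D`
and `E` are the two determinants. A nonzero coordinate of that difference has absolute value at
least `1 / |D * E|`, and directions with coordinates bounded by `B` have determinant at most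
`2 * B ^ 2` in absolute value.
-/

/-- The determinant of a pair of plane vectors, the common denominator of the coordinates of the
crossing point of two lines with these directions. It is written out in coordinates because
directions are pairs, as in `OnIntLine2`. -/
def planarDet {R : Type*} [CommRing R] (v u : R × R) : R :=
  v.1 * u.2 - v.2 * u.1

theorem abs_planarDet_le {R : Type*} [CommRing R] [LinearOrder R] [IsStrictOrderedRing R]
    {B : R} {v u : R × R} (hv : |v.1| ≤ B ∧ |v.2| ≤ B) (hu : |u.1| ≤ B ∧ |u.2| ≤ B) :
    |planarDet v u| ≤ 2 * B ^ 2 := by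
  have hB : 0 ≤ B := (abs_nonneg _).trans hv.1
  calc |planarDet v u| ≤ |v.1 * u.2| + |v.2 * u.1| := abs_sub _ _
    _ = |v.1| * |u.2| + |v.2| * |u.1| := by rw [abs_mul, abs_mul]
    _ ≤ B * B + B * B := by
      gcongr
      exacts [hv.1, hu.2, hv.2, hu.1]
    _ = 2 * B ^ 2 := by ring

theorem planarDet_intCast {R : Type*} [CommRing R] (v u : ℤ × ℤ) :
    planarDet ((v.1 : R), (v.2 : R)) ((u.1 : R), (u.2 : R)) = (planarDet v u : ℤ) := by
  simp only [planarDet, Int.cast_sub, Int.cast_mul]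

theorem planarDet_smul_eq_sub {R : Type*} [CommRing R] (v u p : R × R) :
    planarDet v u • p = planarDet p u • v - planarDet p v • u := by
  ext
  · simp only [planarDet, Prod.smul_fst, Prod.fst_sub, smul_eq_mul]
    ring
  · simp only [planarDet, Prod.smul_snd, Prod.snd_sub, smul_eq_mul]
    ring

theorem OnIntLine2.planarDet_eq_intCast {s v : ℤ × ℤ} {p : EuclideanSpace ℝ (Fin 2)}
    (hp : OnIntLine2 s v p) :
    planarDet (p 0, p 1) ((v.1 : ℝ), (v.2 : ℝ)) = (planarDet s v : ℤ) := by
  obtain ⟨t, h0, h1⟩ := hp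
  rw [← planarDet_intCast, h0, h1]
  simp only [planarDet]
  ring

theorem OnIntLine2.exists_planarDet_mul_eq_intCast {s t v u : ℤ × ℤ}
    {p : EuclideanSpace ℝ (Fin 2)} (hs : OnIntLine2 s v p) (ht : OnIntLine2 t u p) (i : Fin 2) :
    ∃ n : ℤ, (planarDet v u : ℤ) * p i = n := by
  have cramer := planarDet_smul_eq_sub ((v.1 : ℝ), (v.2 : ℝ)) (u.1, u.2) (p 0, p 1)
  rw [planarDet_intCast, hs.planarDet_eq_intCast, ht.planarDet_eq_intCast] at cramer
  obtain ⟨h0, h1⟩ := Prod.ext_iff.mp cramer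
  fin_cases i
  · exact ⟨planarDet t u * v.1 - planarDet s v * u.1, by push_cast; exact h0⟩
  · exact ⟨planarDet t u * v.2 - planarDet s v * u.2, by push_cast; exact h1⟩

theorem inv_abs_mul_le_abs_sub_of_mul_eq_intCast {K : Type*} [Field K] [LinearOrder K]
    [IsStrictOrderedRing K] {a b m n : ℤ} {x y : K} (ha : a ≠ 0) (hb : b ≠ 0)
    (hx : a * x = m) (hy : b * y = n) (hxy : x ≠ y) : |(a * b : K)|⁻¹ ≤ |x - y| := by
  have hab : (a * b : K) ≠ 0 := mul_ne_zero (Int.cast_ne_zero.mpr ha) (Int.cast_ne_zero.mpr hb)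
  have hcast : (a * b : K) * (x - y) = ((b * m - a * n : ℤ) : K) := by
    push_cast
    linear_combination (b : K) * hx - (a : K) * hy
  have hne : b * m - a * n ≠ 0 := by
    rw [← Int.cast_ne_zero (α := K), ← hcast]
    exact mul_ne_zero hab (sub_ne_zero.mpr hxy)
  rw [inv_le_iff_one_le_mul₀' (abs_pos.mpr hab), ← abs_mul, hcast]
  exact_mod_cast Int.one_le_abs hne

theorem inv_abs_mul_le_norm_sub_of_mul_eq_intCast {ι : Type*} [Fintype ι] {p : ENNReal}
    [Fact (1 ≤ p)] {a b : ℤ} {x y : PiLp p (fun _ : ι ↦ ℝ)} (ha : a ≠ 0) (hb : b ≠ 0)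
    (hx : ∀ i, ∃ m : ℤ, a * x i = m) (hy : ∀ i, ∃ n : ℤ, b * y i = n) (hxy : x ≠ y) :
    |(a * b : ℝ)|⁻¹ ≤ ‖x - y‖ := by
  obtain ⟨i, hi⟩ : ∃ i, x i ≠ y i := by
    contrapose! hxy
    exact PiLp.ext hxy
  obtain ⟨m, hm⟩ := hx i
  obtain ⟨n, hn⟩ := hy i
  calc |(a * b : ℝ)|⁻¹ ≤ |x i - y i| := inv_abs_mul_le_abs_sub_of_mul_eq_intCast ha hb hm hn hi
    _ ≤ ‖x - y‖ := PiLp.norm_apply_le (x - y) i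

theorem crossing_points_separation_general {B : ℤ} {s1 s2 s3 s4 v1 v2 v3 v4 : ℤ × ℤ}
    (hb1 : |v1.1| ≤ B ∧ |v1.2| ≤ B) (hb2 : |v2.1| ≤ B ∧ |v2.2| ≤ B)
    (hb3 : |v3.1| ≤ B ∧ |v3.2| ≤ B) (hb4 : |v4.1| ≤ B ∧ |v4.2| ≤ B)
    (h12 : planarDet v1 v2 ≠ 0) (h34 : planarDet v3 v4 ≠ 0)
    {χ χ' : EuclideanSpace ℝ (Fin 2)}
    (hχ1 : OnIntLine2 s1 v1 χ) (hχ2 : OnIntLine2 s2 v2 χ)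
    (hχ3 : OnIntLine2 s3 v3 χ') (hχ4 : OnIntLine2 s4 v4 χ') (hne : χ ≠ χ') :
    (4 * (B : ℝ) ^ 4)⁻¹ ≤ ‖χ - χ'‖ := by
  have hdet : |planarDet v1 v2 * planarDet v3 v4| ≤ 4 * B ^ 4 :=
    calc |planarDet v1 v2 * planarDet v3 v4|
      _ = |planarDet v1 v2| * |planarDet v3 v4| := abs_mul _ _
      _ ≤ (2 * B ^ 2) * (2 * B ^ 2) := by
        gcongr
        exacts [abs_planarDet_le hb1 hb2, abs_planarDet_le hb3 hb4]
      _ = 4 * B ^ 4 := by ring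
  have hpos : 0 < |planarDet v1 v2 * planarDet v3 v4| := abs_pos.mpr (mul_ne_zero h12 h34)
  calc (4 * (B : ℝ) ^ 4)⁻¹
    _ ≤ |((planarDet v1 v2 : ℤ) * (planarDet v3 v4 : ℤ) : ℝ)|⁻¹ :=
      inv_anti₀ (by exact_mod_cast hpos) (by exact_mod_cast hdet)
    _ ≤ ‖χ - χ'‖ :=
      inv_abs_mul_le_norm_sub_of_mul_eq_intCast h12 h34
        (hχ1.exists_planarDet_mul_eq_intCast hχ2) (hχ3.exists_planarDet_mul_eq_intCast hχ4) hne

theorem two_zpow_two_sub_four_mul {K : Type*} [Field K] {w : ℕ} (hw : 1 ≤ w) :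
    (2 : K) ^ ((2 : ℤ) - 4 * (w : ℤ)) = (4 * (2 ^ (w - 1)) ^ 4)⁻¹ := by
  obtain ⟨k, rfl⟩ := Nat.exists_eq_add_of_le' hw
  calc (2 : K) ^ ((2 : ℤ) - 4 * ((k + 1 : ℕ) : ℤ))
    _ = 2 ^ (-((4 * k + 2 : ℕ) : ℤ)) := congrArg _ (by omega)
    _ = (2 ^ (4 * k + 2))⁻¹ := by rw [zpow_neg, zpow_natCast]
    _ = (4 * (2 ^ (k + 1 - 1)) ^ 4)⁻¹ := by
      rw [Nat.add_sub_cancel]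
      ring

/-- Any two distinct crossing points in an arrangement of lines with integer
starting points and integer direction vectors whose coordinates have absolute
value at most `2^(w-1)` are at Euclidean distance at least `2^(2-4w)`. -/
theorem crossing_points_separation
    (w : ℕ) (hw : 1 ≤ w)
    (s1 s2 s3 s4 v1 v2 v3 v4 : ℤ × ℤ)
    (hb1 : |v1.1| ≤ 2 ^ (w - 1) ∧ |v1.2| ≤ 2 ^ (w - 1))
    (hb2 : |v2.1| ≤ 2 ^ (w - 1) ∧ |v2.2| ≤ 2 ^ (w - 1))
    (hb3 : |v3.1| ≤ 2 ^ (w - 1) ∧ |v3.2| ≤ 2 ^ (w - 1))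
    (hb4 : |v4.1| ≤ 2 ^ (w - 1) ∧ |v4.2| ≤ 2 ^ (w - 1))
    (h12 : v1.1 * v2.2 - v1.2 * v2.1 ≠ 0)
    (h34 : v3.1 * v4.2 - v3.2 * v4.1 ≠ 0)
    (χ χ' : EuclideanSpace ℝ (Fin 2))
    (hχ1 : OnIntLine2 s1 v1 χ) (hχ2 : OnIntLine2 s2 v2 χ)
    (hχ3 : OnIntLine2 s3 v3 χ') (hχ4 : OnIntLine2 s4 v4 χ')
    (hne : χ ≠ χ') :
    (2 : ℝ) ^ ((2 : ℤ) - 4 * (w : ℤ)) ≤ ‖χ - χ'‖ := by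
  simpa only [two_zpow_two_sub_four_mul hw, Int.cast_pow, Int.cast_ofNat] using
    crossing_points_separation_general hb1 hb2 hb3 hb4 h12 h34 hχ1 hχ2 hχ3 hχ4 hne
end

section
/- Let ρ be a real number with 1/2 ≤ ρ < 1. Let a_1 > a_2 > … > a_m be a strictly decreasing sequence of positive integers such that a_{j+1} ≤ ⌈ρ·a_j⌉ for every 1 ≤ j < m, and such that a_m ≥ 2. Then m ≤ log_{2/(1+ρ)}(a_1) + 2/(1−ρ) + 1. -/
/-!
Put `T = 2 / (1 - ρ)` and `b = 2 / (1 + ρ)`. For `x ≥ T` the rounding costs at most half of what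
halving gains, `⌈ρ * x⌉ ≤ ρ * x + 1 ≤ x / b`, so a step from such an `x` lowers `logb b x` by at
least one. A step from `x ≤ T` lowers `x` itself by at least one, sizes being integers. Both
`logb b x` and `min x T` are monotone in `x`, so their sum drops by at least one at every step.
-/

open Real

section Potential

/-- The potential `log_b x + min(x, T)` that bounds the length of a chain which contracts by the
factor `b` at sizes above `T`. Capping the linear term at `T` keeps its total contribution
bounded, while it still pays for the uncontrolled steps below `T`. -/
noncomputable def logMinPotential (b T x : ℝ) : ℝ :=
  logb b x + min x T

variable {b T x y : ℝ}

theorem logMinPotential_add_one_le_of_mul_le (hb : 1 < b) (hy : 0 < y) (h : b * y ≤ x) :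
    logMinPotential b T y + 1 ≤ logMinPotential b T x := by
  have hyx : y ≤ x := (le_mul_of_one_le_left hy.le hb.le).trans h
  have hlog : logb b y + 1 ≤ logb b x :=
    calc logb b y + 1 = logb b (b * y) := by
          rw [logb_mul (by positivity) hy.ne', logb_self_eq_one hb, add_comm]
      _ ≤ logb b x := logb_le_logb_of_le hb (by positivity) h
  have hmin : min y T ≤ min x T := min_le_min_right T hyx
  unfold logMinPotential
  linarith

theorem logMinPotential_add_one_le_of_add_one_le (hb : 1 < b) (hy : 0 < y) (hyx : y + 1 ≤ x)
    (hxT : x ≤ T) : logMinPotential b T y + 1 ≤ logMinPotential b T x := by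
  have hlog : logb b y ≤ logb b x := logb_le_logb_of_le hb hy (by linarith)
  have hmin : min y T + 1 ≤ min x T := by
    rw [min_eq_left hxT]
    linarith [min_le_left y T]
  unfold logMinPotential
  linarith

theorem logMinPotential_sub_le (hT : 0 ≤ T) (hx : 0 < x) (hy : 0 < y) :
    logMinPotential b T x - logMinPotential b T y ≤ logb b (x / y) + T := by
  rw [logb_div hx.ne' hy.ne']
  have hmin : 0 ≤ min y T := le_min hy.le hT
  unfold logMinPotential
  linarith [min_le_right x T]

end Potential

section Chain

variable {k l : ℕ}

theorem sub_le_sub_of_forall_add_one_le {f : ℕ → ℝ} (hkl : k ≤ l)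
    (hf : ∀ j ∈ Set.Ico k l, f (j + 1) + 1 ≤ f j) : (l : ℝ) - k ≤ f k - f l := by
  have hanti : AntitoneOn (fun j ↦ f j + j) (Set.Icc k l) := by
    refine antitoneOn_of_add_one_le Set.ordConnected_Icc fun j _ hj hj' ↦ ?_
    push_cast
    linarith [hf j ⟨hj.1, hj'.2⟩]
  linarith [hanti (Set.left_mem_Icc.2 hkl) (Set.right_mem_Icc.2 hkl) hkl]

theorem chain_length_le_logb_add {b T : ℝ} {x : ℕ → ℝ} (hb : 1 < b) (hT : 0 ≤ T) (hkl : k ≤ l)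
    (hl : 0 < x l) (hsub : ∀ j ∈ Set.Ico k l, x (j + 1) + 1 ≤ x j)
    (hmul : ∀ j ∈ Set.Ico k l, T ≤ x j → b * x (j + 1) ≤ x j) :
    (l : ℝ) - k ≤ logb b (x k / x l) + T := by
  have hanti : AntitoneOn x (Set.Icc k l) :=
    antitoneOn_of_add_one_le Set.ordConnected_Icc fun j _ hj hj' ↦ by
      linarith [hsub j ⟨hj.1, hj'.2⟩]
  have hpos : ∀ j ∈ Set.Icc k l, 0 < x j := fun j hj ↦
    hl.trans_le (hanti hj (Set.right_mem_Icc.2 hkl) hj.2)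
  have hdrop : ∀ j ∈ Set.Ico k l,
      logMinPotential b T (x (j + 1)) + 1 ≤ logMinPotential b T (x j) := fun j hj ↦ by
    have hpos_succ : 0 < x (j + 1) := hpos _ ⟨hj.1.trans j.le_succ, hj.2⟩
    rcases le_total T (x j) with hlarge | hsmall
    · exact logMinPotential_add_one_le_of_mul_le hb hpos_succ (hmul j hj hlarge)
    · exact logMinPotential_add_one_le_of_add_one_le hb hpos_succ (hsub j hj) hsmall
  calc (l : ℝ) - k ≤ logMinPotential b T (x k) - logMinPotential b T (x l) :=
        sub_le_sub_of_forall_add_one_le (f := fun j ↦ logMinPotential b T (x j)) hkl hdrop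
    _ ≤ logb b (x k / x l) + T := logMinPotential_sub_le hT (hpos k (Set.left_mem_Icc.2 hkl)) hl

end Chain

section Halving

variable {K : Type*} [Field K] [LinearOrder K] [IsStrictOrderedRing K] {ρ x : K}

theorem one_lt_two_div_one_add (hρ : -1 < ρ) (hρ' : ρ < 1) : 1 < 2 / (1 + ρ) := by
  rw [one_lt_div₀ (by linarith)]
  linarith

theorem ceil_mul_le_of_two_div_one_sub_le [FloorRing K] (hρ : ρ < 1) (hx : 2 / (1 - ρ) ≤ x) :
    (⌈ρ * x⌉ : K) ≤ (1 + ρ) / 2 * x := by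
  have hround : 2 ≤ x * (1 - ρ) := (div_le_iff₀ (sub_pos.2 hρ)).1 hx
  linarith [Int.ceil_lt_add_one (ρ * x)]

end Halving

theorem rho_halving_chain_length_bound_general
    (ρ : ℝ) (hρ1 : -1 < ρ) (hρ2 : ρ < 1)
    (m : ℕ) (hm : 1 ≤ m) (a : ℕ → ℕ)
    (hdec : ∀ j, 1 ≤ j → j < m → a (j + 1) < a j)
    (hhalf : ∀ j, 1 ≤ j → j < m → (a (j + 1) : ℤ) ≤ ⌈ρ * (a j : ℝ)⌉)
    (hlast : 0 < a m) :
    (m : ℝ) ≤ logb (2 / (1 + ρ)) ((a 1 : ℝ) / a m) + 2 / (1 - ρ) + 1 := by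
  have hT : 0 ≤ 2 / (1 - ρ) := div_nonneg zero_le_two (sub_nonneg.2 hρ2.le)
  have hsub : ∀ j ∈ Set.Ico 1 m, (a (j + 1) : ℝ) + 1 ≤ a j := fun j hj ↦ by
    exact_mod_cast hdec j hj.1 hj.2
  have hmul : ∀ j ∈ Set.Ico 1 m, 2 / (1 - ρ) ≤ (a j : ℝ) →
      2 / (1 + ρ) * (a (j + 1) : ℝ) ≤ a j := fun j hj hlarge ↦ by
    have hceil : (a (j + 1) : ℝ) ≤ ⌈ρ * (a j : ℝ)⌉ := by exact_mod_cast hhalf j hj.1 hj.2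
    have hcontract := hceil.trans (ceil_mul_le_of_two_div_one_sub_le hρ2 hlarge)
    rw [div_mul_eq_mul_div, div_le_iff₀ (by linarith)]
    linarith
  have hlength := chain_length_le_logb_add (x := fun j ↦ (a j : ℝ))
    (one_lt_two_div_one_add hρ1 hρ2) hT hm (Nat.cast_pos.2 hlast) hsub hmul
  rw [Nat.cast_one] at hlength
  linarith

/-- ρ-halving chain bound: for `1/2 ≤ ρ < 1`, if `a_1 > a_2 > … > a_m` are
positive integers with `a_{j+1} ≤ ⌈ρ · a_j⌉` for `1 ≤ j < m` and `a_m ≥ 2`,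
then `m ≤ log_{2/(1+ρ)}(a_1) + 2/(1-ρ) + 1`. -/
theorem rho_halving_chain_length_bound
    (ρ : ℝ) (hρ1 : 1 / 2 ≤ ρ) (hρ2 : ρ < 1)
    (m : ℕ) (hm : 1 ≤ m) (a : ℕ → ℕ)
    (hpos : ∀ j, 1 ≤ j → j ≤ m → 0 < a j)
    (hdec : ∀ j, 1 ≤ j → j < m → a (j + 1) < a j)
    (hhalf : ∀ j, 1 ≤ j → j < m → (a (j + 1) : ℤ) ≤ ⌈ρ * (a j : ℝ)⌉)
    (hlast : 2 ≤ a m) :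
    (m : ℝ) ≤ Real.logb (2 / (1 + ρ)) (a 1 : ℝ) + 2 / (1 - ρ) + 1 := by
  have ha1 : 0 < a 1 := hpos 1 le_rfl hm
  have hbase := one_lt_two_div_one_add (by linarith) hρ2
  grw [rho_halving_chain_length_bound_general ρ (by linarith) hρ2 m hm a hdec hhalf (by lia),
    div_le_self (a 1).cast_nonneg (by exact_mod_cast (by lia : 1 ≤ a m))]
end

section
/- Let A_1, …, A_C be finite multisets of real numbers with total size N = |A_1| + … + |A_C| > 0. For each k, let m_k ∈ ℝ be a median of A_k, meaning that the number of elements of A_k that are ≤ m_k is at least |A_k|/2 and the number of elements of A_k that are ≥ m_k is at least |A_k|/2. Let h ∈ ℝ be a weighted median of the points m_1, …, m_C with weights |A_1|, …, |A_C|, meaning that the total weight of the indices k with m_k ≤ h is at least N/2 and the total weight of the indices k with m_k ≥ h is at least N/2. Then the number of elements of the combined multiset A_1 ∪ … ∪ A_C (with multiplicity) that are strictly less than h is at most (3/4)·N, and the number of elements strictly greater than h is at most (3/4)·N. -/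
/-!
A group whose median is at least `h` has at least half of its elements at or above `h`, and such
groups carry at least half of the total weight. Hence at least a quarter of all elements are `≥ h`,
so at most three quarters are `< h`; the other bound is the order dual.
-/

theorem card_filter_add_card_filter_le_card {α : Type*} (s : Multiset α) (p q : α → Prop)
    [DecidablePred p] [DecidablePred q] (hpq : ∀ x, p x → ¬ q x) :
    (s.filter p).card + (s.filter q).card ≤ s.card :=
  calc (s.filter p).card + (s.filter q).card
      ≤ (s.filter fun x => ¬ q x).card + (s.filter q).card :=
        Nat.add_le_add_right (Multiset.card_le_card (Multiset.monotone_filter_right s hpq)) _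
    _ = s.card := by rw [add_comm, ← Multiset.card_add, Multiset.filter_add_not]

section Quantile

variable {ι α : Type*} [Preorder α] [DecidableLE α] {s : Finset ι} {A : ι → Multiset α}
  {m : ι → α} {h : α} {a b : ℕ}

theorem sum_card_le_mul_sum_card_filter_ge
    (hm : ∀ i ∈ s, (A i).card ≤ a * ((A i).filter (fun x => m i ≤ x)).card)
    (hw : ∑ i ∈ s, (A i).card ≤ b * ∑ i ∈ s with h ≤ m i, (A i).card) :
    ∑ i ∈ s, (A i).card ≤ b * (a * ∑ i ∈ s, ((A i).filter (fun x => h ≤ x)).card) := by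
  have card_le_of_le (i : ι) (hi : i ∈ s) (hhm : h ≤ m i) :
      (A i).card ≤ a * ((A i).filter (fun x => h ≤ x)).card :=
    (hm i hi).trans <| Nat.mul_le_mul_left a <| Multiset.card_le_card <|
      Multiset.monotone_filter_right (A i) fun _ hx => hhm.trans hx
  calc ∑ i ∈ s, (A i).card
      ≤ b * ∑ i ∈ s with h ≤ m i, (A i).card := hw
    _ ≤ b * ∑ i ∈ s with h ≤ m i, a * ((A i).filter (fun x => h ≤ x)).card := by
        gcongr with i hi
        exact card_le_of_le i (Finset.mem_filter.mp hi).1 (Finset.mem_filter.mp hi).2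
    _ ≤ b * ∑ i ∈ s, a * ((A i).filter (fun x => h ≤ x)).card := by
        gcongr
        exact Finset.filter_subset _ s
    _ = b * (a * ∑ i ∈ s, ((A i).filter (fun x => h ≤ x)).card) := by rw [← Finset.mul_sum]

-- With `N = ∑ i ∈ s, (A i).card`, this bounds the number of elements below `h` by
-- `(1 - 1 / (a * b)) * N`, cleared of denominators and subtraction.
theorem mul_sum_card_filter_lt_add_sum_card_le [DecidableLT α]
    (hm : ∀ i ∈ s, (A i).card ≤ a * ((A i).filter (fun x => m i ≤ x)).card)
    (hw : ∑ i ∈ s, (A i).card ≤ b * ∑ i ∈ s with h ≤ m i, (A i).card) :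
    b * (a * ∑ i ∈ s, ((A i).filter (fun x => x < h)).card) + ∑ i ∈ s, (A i).card ≤
      b * (a * ∑ i ∈ s, (A i).card) :=
  calc b * (a * ∑ i ∈ s, ((A i).filter (fun x => x < h)).card) + ∑ i ∈ s, (A i).card
      ≤ b * (a * ∑ i ∈ s, ((A i).filter (fun x => x < h)).card) +
          b * (a * ∑ i ∈ s, ((A i).filter (fun x => h ≤ x)).card) :=
        Nat.add_le_add_left (sum_card_le_mul_sum_card_filter_ge hm hw) _
    _ = b * (a * ∑ i ∈ s, (((A i).filter (fun x => x < h)).card +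
          ((A i).filter (fun x => h ≤ x)).card)) := by
        rw [Finset.sum_add_distrib, mul_add, mul_add]
    _ ≤ b * (a * ∑ i ∈ s, (A i).card) := by
        gcongr with i
        exact card_filter_add_card_filter_le_card (A i) _ _ fun _ => not_le_of_gt

end Quantile

theorem weighted_median_of_medians_is_three_quarters_halving_general
    {ι α : Type*} [Preorder α] [DecidableLE α] [DecidableLT α]
    (s : Finset ι) (A : ι → Multiset α) (med : ι → α)
    (hmedle : ∀ k ∈ s, (A k).card ≤ 2 * ((A k).filter (fun x => x ≤ med k)).card)
    (hmedge : ∀ k ∈ s, (A k).card ≤ 2 * ((A k).filter (fun x => med k ≤ x)).card)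
    (h : α)
    (hwle : ∑ k ∈ s, (A k).card ≤ 2 * ∑ k ∈ s with med k ≤ h, (A k).card)
    (hwge : ∑ k ∈ s, (A k).card ≤ 2 * ∑ k ∈ s with h ≤ med k, (A k).card) :
    4 * (∑ k ∈ s, ((A k).filter (fun x => x < h)).card) ≤ 3 * ∑ k ∈ s, (A k).card ∧
    4 * (∑ k ∈ s, ((A k).filter (fun x => h < x)).card) ≤ 3 * ∑ k ∈ s, (A k).card := by
  have below := mul_sum_card_filter_lt_add_sum_card_le hmedge hwge
  have above : 2 * (2 * ∑ k ∈ s, ((A k).filter (fun x => h < x)).card) + ∑ k ∈ s, (A k).card ≤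
      2 * (2 * ∑ k ∈ s, (A k).card) :=
    mul_sum_card_filter_lt_add_sum_card_le (α := αᵒᵈ) hmedle hwle
  constructor <;> omega

/-- The weighted median of group medians is a 3/4-halving point: at most
`(3/4)·N` elements of the combined multiset are strictly less than it, and at
most `(3/4)·N` are strictly greater. Median and weighted-median conditions are
expressed by multiplying through by 2. -/
theorem weighted_median_of_medians_is_three_quarters_halving
    (C : ℕ) (A : Fin C → Multiset ℝ)
    (N : ℕ) (hN : N = ∑ k, (A k).card) (hNpos : 0 < N)
    (med : Fin C → ℝ)
    (hmedle : ∀ k, (A k).card ≤ 2 * ((A k).filter (fun x => x ≤ med k)).card)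
    (hmedge : ∀ k, (A k).card ≤ 2 * ((A k).filter (fun x => med k ≤ x)).card)
    (h : ℝ)
    (hwle : N ≤ 2 * ∑ k ∈ Finset.univ.filter (fun k => med k ≤ h), (A k).card)
    (hwge : N ≤ 2 * ∑ k ∈ Finset.univ.filter (fun k => h ≤ med k), (A k).card) :
    4 * (∑ k, ((A k).filter (fun x => x < h)).card) ≤ 3 * N ∧
    4 * (∑ k, ((A k).filter (fun x => h < x)).card) ≤ 3 * N := by
  subst hN
  exact weighted_median_of_medians_is_three_quarters_halving_general Finset.univ A med
    (fun k _ => hmedle k) (fun k _ => hmedge k) h hwle hwge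
end
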